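/- Let A be a finite-dimensional hereditary algebra with quiver Q_A, and let a be a sink of Q_A. Then over the duplicated algebra Ā, the indecomposable injective A-module I_a is isomorphic to the radical of the projective-injective Ā-module P̄_{a'} = Ī_a. -/

import Mathlib

/-!
A simple projective right `A`-module `S` is isomorphic to `eA` for an idempotent `e`
(`exists_idempotent`), and `Q` is then the right ideal `e'Ā = eA ⊕ eDA`, where `e' = (0, e)` lies
in the second diagonal copy of `A`. As `eA` is simple, this ideal is local with radical `eDA`,
which is also its largest submodule coming from an `A`-module (`annSub`).

To compare `Q` with `e'Ā` without first proving the latter injective, take a `k`-linear functional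
`ψ` on `Q` that does not vanish on the socle. The pairing between `e'Ā` and `Ā(e, 0)` is perfect
because `A` is finite dimensional, so `ψ` determines a homomorphism `h : Q → e'Ā ⊆ Ā`
(`exists_hom_of_functional`). It is injective because the socle of `Q` is essential, and it splits
because `Q` is injective; so `Q` is a direct summand of `Ā`, hence projective, and the retraction
sends `e'` to a generator `w` of `Q`. Every element of `Q` outside `annSub` generates `w`
(`structure_of_envelope`), so `annSub` is the unique maximal submodule (`sInf_coatoms_eq_annSub`).

Finally `S → Q` extends to an embedding of `I` into `annSub`. Over `A` it splits since `I` is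
injective, and the complement of `I` in `annSub` is an `Ā`-submodule of `Q` missing the essential
socle, hence zero: `I` is all of `annSub`.
-/

open TrivSqZeroExt Module CategoryTheory

universe u

section Gen
variable (R : Type u) [Ring R]

/-- A module is indecomposable: nonzero and admitting no nontrivial direct sum decomposition. -/
def Indec (M : ModuleCat.{u} R) : Prop :=
  (⊥ : Submodule R M) ≠ ⊤ ∧ ∀ U V : Submodule R M, IsCompl U V → U = ⊥ ∨ V = ⊥

/-- projective dimension at most `n` -/
def PDimLE : ℕ → ModuleCat.{u} R → Prop
  | 0, M => Module.Projective R M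
  | (n+1), M => ∃ (P : ModuleCat.{u} R) (g : P →ₗ[R] M), Module.Projective R P ∧
      Function.Surjective g ∧ PDimLE n (ModuleCat.of R (LinearMap.ker g))

/-- injective dimension at most 1 -/
def IDimLE1 (M : ModuleCat.{u} R) : Prop :=
  ∃ (I : ModuleCat.{u} R) (f : M →ₗ[R] I), Module.Injective R I ∧ Function.Injective f ∧
    Module.Injective R ((I : Type u) ⧸ LinearMap.range f)

/-- one step in a path: a nonzero morphism between indecomposables -/
def NZHom (M N : ModuleCat.{u} R) : Prop :=
  Indec R M ∧ Indec R N ∧ ∃ f : M →ₗ[R] N, f ≠ 0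

/-- there is a path of nonzero morphisms between indecomposables from `M` to `N` -/
def IsPath (M N : ModuleCat.{u} R) : Prop :=
  Indec R M ∧ Indec R N ∧ Relation.ReflTransGen (NZHom R) M N

/-- `M` lies in the left part `L` of the module category -/
def InLeftPart (M : ModuleCat.{u} R) : Prop :=
  Indec R M ∧ ∀ L : ModuleCat.{u} R, IsPath R L M → PDimLE R 1 L

/-- `M` lies in the right part `R` of the module category -/
def InRightPart (M : ModuleCat.{u} R) : Prop :=
  Indec R M ∧ ∀ N : ModuleCat.{u} R, IsPath R M N → IDimLE1 R N

/-- Ext¹(Z,Y) = 0: every short exact sequence 0 → Y → E → Z → 0 splits. -/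
def Ext1Vanish (Z Y : ModuleCat.{u} R) : Prop :=
  ∀ (E : ModuleCat.{u} R) (f : Y →ₗ[R] E) (g : E →ₗ[R] Z),
    Function.Injective f → Function.Surjective g → Function.Exact f g →
      ∃ s : Z →ₗ[R] E, g.comp s = LinearMap.id

/-- Ext^n(Z,Y) = 0, defined by dimension shifting. -/
def ExtVanish : ℕ → ModuleCat.{u} R → ModuleCat.{u} R → Prop
  | 0, _, _ => True
  | 1, Z, Y => Ext1Vanish R Z Y
  | (n+2), Z, Y => ∀ (P : ModuleCat.{u} R) (g : P →ₗ[R] Z),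
      Module.Projective R P → Function.Surjective g →
        ExtVanish (n+1) (ModuleCat.of R (LinearMap.ker g)) Y

/-- an almost split (Auslander-Reiten) sequence 0 → X → E → Z → 0 -/
def AlmostSplitSeq (X E Z : ModuleCat.{u} R) (f : X →ₗ[R] E) (g : E →ₗ[R] Z) : Prop :=
  Function.Injective f ∧ Function.Surjective g ∧ Function.Exact f g ∧
  Indec R X ∧ Indec R Z ∧
  (¬ ∃ s : Z →ₗ[R] E, g.comp s = LinearMap.id) ∧
  (∀ (W : ModuleCat.{u} R) (h : W →ₗ[R] Z),
     (¬ ∃ s : Z →ₗ[R] W, h.comp s = LinearMap.id) → ∃ u : W →ₗ[R] E, g.comp u = h)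

/-- `N` is an inverse Auslander-Reiten translate `τ⁻¹ M` (realized by an almost split sequence) -/
def IsTauInv (M N : ModuleCat.{u} R) : Prop :=
  ∃ (E : ModuleCat.{u} R) (f : M →ₗ[R] E) (g : E →ₗ[R] N), AlmostSplitSeq R M E N f g

/-- `N` is the Auslander-Reiten translate `τ M` -/
def IsTau (M N : ModuleCat.{u} R) : Prop := IsTauInv R N M

/-- `f : M → I` is an injective envelope -/
def IsInjEnvelope (M I : ModuleCat.{u} R) (f : M →ₗ[R] I) : Prop :=
  Module.Injective R I ∧ Function.Injective f ∧
    ∀ U : Submodule R I, U ≠ ⊥ → U ⊓ LinearMap.range f ≠ ⊥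

/-- `p : P → M` is a projective cover -/
def IsProjCover (P M : ModuleCat.{u} R) (p : P →ₗ[R] M) : Prop :=
  Module.Projective R P ∧ Function.Surjective p ∧
    ∀ U : Submodule R P, U ⊔ LinearMap.ker p = ⊤ → U = ⊤

/-- `N` is a first cosyzygy `Ω⁻¹ M` -/
def IsCosyzygy (M N : ModuleCat.{u} R) : Prop :=
  ∃ (I : ModuleCat.{u} R) (f : M →ₗ[R] I), IsInjEnvelope R M I f ∧
    Nonempty (N ≃ₗ[R] ((I : Type u) ⧸ LinearMap.range f))

/-- `X` is a direct summand of `Y` -/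
def DirectSummand (X Y : ModuleCat.{u} R) : Prop :=
  ∃ (i : X →ₗ[R] Y) (r : Y →ₗ[R] X), r.comp i = LinearMap.id

/-- `M` is projective-injective -/
def ProjInj (M : ModuleCat.{u} R) : Prop := Module.Projective R M ∧ Module.Injective R M

end Gen

section DupAlg
variable (k : Type u) [Field k] (A : Type u) [Ring A] [Algebra k A]

noncomputable instance dualModL : Module (A × A) (Module.Dual k A) where
  smul p q := q.comp (LinearMap.mulRight k p.2)
  one_smul q := by ext x; show q (x * 1) = q x; simp
  mul_smul p p' q := by ext x; show q (x * (p.2 * p'.2)) = q (x * p.2 * p'.2); rw [mul_assoc]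
  smul_zero p := by ext x; rfl
  smul_add p q q' := by ext x; rfl
  add_smul p p' q := by ext x; show q (x * (p.2 + p'.2)) = q (x * p.2) + q (x * p'.2); rw [mul_add, map_add]
  zero_smul q := by ext x; show q (x * 0) = 0; simp

noncomputable instance dualModR : Module (A × A)ᵐᵒᵖ (Module.Dual k A) where
  smul p q := q.comp (LinearMap.mulLeft k p.unop.1)
  one_smul q := by ext x; show q ((1 : A) * x) = q x; simp
  mul_smul p p' q := by
    ext x
    show q ((p'.unop.1 * p.unop.1) * x) = q (p'.unop.1 * (p.unop.1 * x))
    rw [mul_assoc]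
  smul_zero p := by ext x; rfl
  smul_add p q q' := by ext x; rfl
  add_smul p p' q := by
    ext x
    show q ((p.unop.1 + p'.unop.1) * x) = q (p.unop.1 * x) + q (p'.unop.1 * x)
    rw [add_mul, map_add]
  zero_smul q := by ext x; show q ((0 : A) * x) = 0; simp

instance dualSMulComm : SMulCommClass (A × A) (A × A)ᵐᵒᵖ (Module.Dual k A) where
  smul_comm p p' q := by
    ext x
    show q (p'.unop.1 * (x * p.2)) = q ((p'.unop.1 * x) * p.2)
    rw [mul_assoc]

/-- The duplicated algebra Ā = [[A,0],[DA,A]] of `A`, realized as the trivial extension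
of `A × A` by the bimodule `DA = Hom_k(A,k)`. -/
abbrev Dup := TrivSqZeroExt (A × A) (Module.Dual k A)

/-- the canonical surjection Ā → A onto the first diagonal copy of A -/
noncomputable def dupProj₁ : Dup k A →+* A where
  toFun x := x.fst.1
  map_one' := rfl
  map_mul' x y := by simp
  map_zero' := rfl
  map_add' x y := by simp

/-- the canonical surjection Ā → A onto the second diagonal copy of A -/
noncomputable def dupProj₂ : Dup k A →+* A where
  toFun x := x.fst.2
  map_one' := rfl
  map_mul' x y := by simp
  map_zero' := rfl
  map_add' x y := by simp

/-- Right modules over a ring are left modules over its opposite; this is the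
restriction functor from right A-modules to right Ā-modules along Ā → A (first copy),
that is, the standard embedding mod A ↪ mod Ā. -/
noncomputable abbrev resA : ModuleCat.{u} Aᵐᵒᵖ ⥤ ModuleCat.{u} (Dup k A)ᵐᵒᵖ :=
  ModuleCat.restrictScalars (RingHom.op (dupProj₁ k A))

/-- restriction along the second projection Ā → A' -/
noncomputable abbrev resA' : ModuleCat.{u} Aᵐᵒᵖ ⥤ ModuleCat.{u} (Dup k A)ᵐᵒᵖ :=
  ModuleCat.restrictScalars (RingHom.op (dupProj₂ k A))

/-- a right Ā-module "belongs to mod A": the kernel of Ā → A acts as zero,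
i.e. it is the restriction of an A-module along the first projection. -/
def ActsThroughA (M : ModuleCat.{u} (Dup k A)ᵐᵒᵖ) : Prop :=
  ∀ x : Dup k A, x.fst.1 = 0 → ∀ m : M, (MulOpposite.op x) • m = 0

/-- a right Ā-module is the restriction of an A'-module along the second projection. -/
def ActsThroughA' (M : ModuleCat.{u} (Dup k A)ᵐᵒᵖ) : Prop :=
  ∀ x : Dup k A, x.fst.2 = 0 → ∀ m : M, (MulOpposite.op x) • m = 0

/-- the idempotent e' of Ā -/
noncomputable def eDup' : Dup k A := TrivSqZeroExt.inl ((0, 1) : A × A)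

/-- the right ideal e'Ā of Ā, as a right Ā-module -/
noncomputable def eDupMod : ModuleCat.{u} (Dup k A)ᵐᵒᵖ :=
  ModuleCat.of (Dup k A)ᵐᵒᵖ (Submodule.span (Dup k A)ᵐᵒᵖ {eDup' k A})

/-- a ring is (left) hereditary: every (left) ideal is projective. Applied to `Aᵐᵒᵖ`
this says that `A` is right hereditary. -/
def IsHereditaryRing (B : Type u) [Ring B] : Prop :=
  ∀ I : Submodule B B, Module.Projective B I

end DupAlg

section Gen2
variable (R : Type u) [Ring R]

/-- `f` is a split monomorphism (section) -/
def IsSplitMonoL {X Y : ModuleCat.{u} R} (f : X →ₗ[R] Y) : Prop :=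
  ∃ r : Y →ₗ[R] X, r.comp f = LinearMap.id

/-- `f` is a split epimorphism (retraction) -/
def IsSplitEpiL {X Y : ModuleCat.{u} R} (f : X →ₗ[R] Y) : Prop :=
  ∃ s : Y →ₗ[R] X, f.comp s = LinearMap.id

/-- `f` is an irreducible morphism -/
def IrreducibleHom {X Y : ModuleCat.{u} R} (f : X →ₗ[R] Y) : Prop :=
  ¬ IsSplitMonoL R f ∧ ¬ IsSplitEpiL R f ∧
  ∀ (W : ModuleCat.{u} R) (g : X →ₗ[R] W) (h : W →ₗ[R] Y), h.comp g = f →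
    IsSplitMonoL R g ∨ IsSplitEpiL R h

/-- a path `M = M₀ → M₁ → ⋯ → M_t = N` of nonzero morphisms between indecomposables,
recorded with its data -/
structure MPath (M N : ModuleCat.{u} R) where
  len : ℕ
  obj : Fin (len + 1) → ModuleCat.{u} R
  hom : ∀ i : Fin len, obj i.castSucc →ₗ[R] obj i.succ
  indec : ∀ i, Indec R (obj i)
  nonzero : ∀ i, hom i ≠ 0
  first : obj 0 = M
  last : obj (Fin.last len) = N

/-- the path consists of irreducible morphisms -/
def MPath.IsIrr {M N : ModuleCat.{u} R} (p : MPath R M N) : Prop :=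
  ∀ i, IrreducibleHom R (p.hom i)

/-- the path is sectional: `τ M_{i+1} ≇ M_{i-1}` for all `i` -/
def MPath.Sectional {M N : ModuleCat.{u} R} (p : MPath R M N) : Prop :=
  ∀ (i : ℕ) (h : i + 2 ≤ p.len),
    ¬ IsTau R (p.obj ⟨i + 2, by omega⟩) (p.obj ⟨i, by omega⟩)

/-- `q` is a refinement of `p`: a longer path passing through the modules of `p` in order -/
def MPath.Refines {M N : ModuleCat.{u} R} (q p : MPath R M N) : Prop :=
  ∃ σ : Fin (p.len + 1) → Fin (q.len + 1), StrictMono σ ∧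
    σ 0 = 0 ∧ σ (Fin.last p.len) = Fin.last q.len ∧ ∀ i, q.obj (σ i) = p.obj i

/-- `M` is an indecomposable Ext-injective object of `add L` (the additive closure of the
left part): it is in the left part and `Ext¹(X, M) = 0` for every `X` in the left part -/
def ExtInjLeft (M : ModuleCat.{u} R) : Prop :=
  InLeftPart R M ∧ ∀ X : ModuleCat.{u} R, InLeftPart R X → Ext1Vanish R X M

/-- `T` is multiplicity-free: no indecomposable occurs twice as a direct summand -/
def MultFree (T : ModuleCat.{u} R) : Prop :=
  ∀ X : ModuleCat.{u} R, Indec R X →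
    ¬ DirectSummand R (ModuleCat.of R (Prod (X : Type u) (X : Type u))) T

/-- `X` belongs to `add T` -/
def InAdd (T X : ModuleCat.{u} R) : Prop :=
  ∃ n : ℕ, DirectSummand R X (ModuleCat.of R (Fin n → (T : Type u)))

/-- `M` admits a coresolution of length `n` by modules in `add T` -/
def CoresolvedBy (T : ModuleCat.{u} R) : ℕ → ModuleCat.{u} R → Prop
  | 0, M => InAdd R T M
  | (n+1), M => ∃ (T₀ : ModuleCat.{u} R) (f : M →ₗ[R] T₀), InAdd R T T₀ ∧
      Function.Injective f ∧
      CoresolvedBy T n (ModuleCat.of R ((T₀ : Type u) ⧸ LinearMap.range f))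

/-- `T` is a (generalized) tilting module: finite projective dimension, no self-extensions
in positive degrees, and the regular module has a finite coresolution in `add T` -/
def IsTiltingModule (T : ModuleCat.{u} R) : Prop :=
  (∃ n, PDimLE R n T) ∧ (∀ i, 0 < i → ExtVanish R i T T) ∧
  (∃ n, CoresolvedBy R T n (ModuleCat.of R R))

/-- `X` lies in the additive closure of the class `P` of modules -/
def InAddOf (P : ModuleCat.{u} R → Prop) (X : ModuleCat.{u} R) : Prop :=
  ∃ (n : ℕ) (D : Fin n → ModuleCat.{u} R), (∀ i, P (D i)) ∧
    DirectSummand R X (ModuleCat.of R ((i : Fin n) → (D i : Type u)))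

/-- the additive closure of the class `P` is contravariantly finite: every finitely
generated module has a right `add P`-approximation -/
def ContravariantlyFinite (P : ModuleCat.{u} R → Prop) : Prop :=
  ∀ M : ModuleCat.{u} R, Module.Finite R M →
    ∃ (X : ModuleCat.{u} R) (f : X →ₗ[R] M), InAddOf R P X ∧
      ∀ (X' : ModuleCat.{u} R) (g : X' →ₗ[R] M), InAddOf R P X' →
        ∃ h : X' →ₗ[R] X, f.comp h = g

/-- the additive closure of the class `P` is covariantly finite: every finitely
generated module has a left `add P`-approximation -/
def CovariantlyFinite (P : ModuleCat.{u} R → Prop) : Prop :=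
  ∀ M : ModuleCat.{u} R, Module.Finite R M →
    ∃ (X : ModuleCat.{u} R) (f : M →ₗ[R] X), InAddOf R P X ∧
      ∀ (X' : ModuleCat.{u} R) (g : M →ₗ[R] X'), InAddOf R P X' →
        ∃ h : X →ₗ[R] X', h.comp f = g

/-- isomorphism of simple modules, as a setoid -/
def simpleIsoSetoid : Setoid {S : ModuleCat.{u} R // IsSimpleModule R S} where
  r S T := Nonempty (S.1 ≃ₗ[R] T.1)
  iseqv := ⟨fun S => ⟨LinearEquiv.refl _ _⟩,
    fun ⟨e⟩ => ⟨e.symm⟩, fun ⟨e⟩ ⟨f⟩ => ⟨e.trans f⟩⟩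

/-- the number of isomorphism classes of simple `R`-modules (the rank of `K₀(R)`
for a finite dimensional algebra `R`) -/
noncomputable def NumSimples : ℕ := Nat.card (Quotient (simpleIsoSetoid R))

/-- the algebra is representation-finite -/
def RepFinite : Prop :=
  ∃ (n : ℕ) (Ls : Fin n → ModuleCat.{u} R), ∀ M : ModuleCat.{u} R,
    Module.Finite R M → Indec R M → ∃ i, Nonempty (M ≃ₗ[R] Ls i)

/-- the algebra is laura: only finitely many indecomposables lie outside `L ∪ R` -/
def LauraAlg : Prop :=
  ∃ (n : ℕ) (Ls : Fin n → ModuleCat.{u} R), ∀ M : ModuleCat.{u} R,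
    Module.Finite R M → Indec R M → ¬ InLeftPart R M → ¬ InRightPart R M →
      ∃ i, Nonempty (M ≃ₗ[R] Ls i)

end Gen2

section Cat
variable (C : Type u) [Category.{u} C] [Preadditive C] [Limits.HasBinaryBiproducts C]

/-- an object of an additive category is indecomposable -/
def IndecObjC (X : C) : Prop :=
  ¬ Limits.IsZero X ∧ ∀ Y Z : C, Nonempty (X ≅ Y ⊞ Z) →
    Limits.IsZero Y ∨ Limits.IsZero Z

end Cat

instance restrictScalarsAdditive {R S : Type u} [Ring R] [Ring S] (f : R →+* S) :
    (ModuleCat.restrictScalars.{u} f).Additive where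
  map_add := rfl


/-! ### Simple projective modules -/

section Helpers
variable {k A : Type u} [Field k] [Ring A] [Algebra k A]

/-- A simple projective right module is `eA` for an idempotent `e`; the last clause says that
`eA` is simple, and `x` corresponds to `e`. -/
lemma exists_idempotent {S : Type u} [AddCommGroup S] [Module Aᵐᵒᵖ S]
    (hS : IsSimpleModule Aᵐᵒᵖ S) (hSproj : Module.Projective Aᵐᵒᵖ S) :
    ∃ (x : S) (e : A), x ≠ 0 ∧ e * e = e ∧ MulOpposite.op e • x = x ∧
      ∀ a : A, e * a = a → a ≠ 0 → ∃ c : A, a * c = e := by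
  have := hS.nontrivial
  obtain ⟨x, hx⟩ := exists_ne (0 : S)
  obtain ⟨s, hs⟩ := Module.projective_lifting_property (LinearMap.toSpanSingleton Aᵐᵒᵖ S x)
    LinearMap.id (IsSimpleModule.toSpanSingleton_surjective Aᵐᵒᵖ hx)
  have hs' : ∀ y, s y • x = y := fun y => by simpa using LinearMap.congr_fun hs y
  have hmul : ∀ a : A, (s x).unop * a = (s (MulOpposite.op a • x)).unop := fun a => by
    rw [map_smul]; rfl
  have hex : MulOpposite.op (s x).unop • x = x := hs' x
  refine ⟨x, (s x).unop, hx, ?_, hex, ?_⟩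
  · rw [hmul, hex]
  · intro a ha ha0
    have hxa : MulOpposite.op a • x ≠ 0 := by
      intro h0
      apply ha0
      rw [← ha, hmul, h0, map_zero, MulOpposite.unop_zero]
    obtain ⟨c, hc⟩ := IsSimpleModule.toSpanSingleton_surjective Aᵐᵒᵖ hxa x
    refine ⟨c.unop, ?_⟩
    have hc' : MulOpposite.op (a * c.unop) • x = x := by
      rw [MulOpposite.op_mul, mul_smul]; exact hc
    rw [← ha, mul_assoc, hmul, hc']

/-! ### Homomorphisms into the duplicated algebra -/

lemma dual_smul_left (p : A × A) (q : Module.Dual k A) (x : A) : (p • q) x = q (x * p.2) := rfl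

lemma dual_smul_right (p : A × A) (q : Module.Dual k A) (x : A) :
    (MulOpposite.op p • q) x = q (p.1 * x) := rfl

/-- Homomorphisms to `(0, e)Ā` from functionals. For idempotent `e`, the form
`(x, y) ↦ (x * y).snd 1` pairs `(0, e)Ā` perfectly with `Ā(e, 0)`, and `h m` is the element
representing `y ↦ ψ (m * y)` on `Ā(e, 0)`. The hypothesis on `ψ` is `k`-linearity, expressed
through the action of the algebra so that no `k`-module structure on `Q` is needed. -/
lemma exists_hom_of_functional [FiniteDimensional k A] {Q : Type u} [AddCommGroup Q]
    [Module (Dup k A)ᵐᵒᵖ Q] (e : A) (ψ : Q →+ k)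
    (hψ : ∀ (c : k) (m : Q), ψ (MulOpposite.op
      (inl (algebraMap k A c, algebraMap k A c) : Dup k A) • m) = c * ψ m) :
    ∃ h : Q →ₗ[(Dup k A)ᵐᵒᵖ] (Dup k A)ᵐᵒᵖ, ∀ m, (h m).unop.fst.1 = 0 ∧
      (∀ b : A, (h m).unop.snd b = ψ (MulOpposite.op (inl (b * e, 0) : Dup k A) • m)) ∧
      ∀ r : Module.Dual k A, r (h m).unop.fst.2 =
        ψ (MulOpposite.op (inr (r.comp (LinearMap.mulLeft k e)) : Dup k A) • m) := by
  -- `h m = (0, a m, q m)`, where `a m` is recovered from its double dual `t m`.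
  let q : Q → Module.Dual k A := fun m =>
    { toFun := fun b => ψ (MulOpposite.op (inl (b * e, 0) : Dup k A) • m)
      map_add' := fun b c => by
        rw [← map_add, ← add_smul, ← MulOpposite.op_add, ← inl_add]
        simp [add_mul]
      map_smul' := fun c b => by
        rw [RingHom.id_apply, smul_eq_mul, ← hψ, ← mul_smul, ← MulOpposite.op_mul, ← inl_mul]
        simp [Algebra.smul_def, mul_assoc, Algebra.commutes] }
  let t : Q → Module.Dual k (Module.Dual k A) := fun m =>
    { toFun := fun r => ψ (MulOpposite.op (inr (r.comp (LinearMap.mulLeft k e)) : Dup k A) • m)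
      map_add' := fun b c => by
        rw [← map_add, ← add_smul, ← MulOpposite.op_add, ← inr_add, LinearMap.add_comp]
      map_smul' := fun c r => by
        rw [RingHom.id_apply, smul_eq_mul, ← hψ, ← mul_smul, ← MulOpposite.op_mul, inr_mul_inl]
        congr 4
        ext x
        simp [dual_smul_right, ← Algebra.smul_def] }
  let a : Q → A := fun m => (Module.evalEquiv k A).symm (t m)
  have ha : ∀ (m : Q) (r : Module.Dual k A), r (a m) =
      ψ (MulOpposite.op (inr (r.comp (LinearMap.mulLeft k e)) : Dup k A) • m) := fun m r =>
    Module.apply_evalEquiv_symm_apply k A r (t m)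
  have hq : ∀ (m : Q) (b : A), q m b = ψ (MulOpposite.op (inl (b * e, 0) : Dup k A) • m) :=
    fun m b => rfl
  have hA : ∀ x y : A, (∀ r : Module.Dual k A, r x = r y) → x = y := fun x y h =>
    (Module.evalEquiv k A).injective (LinearMap.ext h)
  refine ⟨{ toFun := fun m => MulOpposite.op (inl (0, a m) + inr (q m) : Dup k A)
            map_add' := fun m n => ?_
            map_smul' := fun y m => ?_ }, fun m => ⟨?_, fun b => ?_, fun r => ?_⟩⟩
  · apply MulOpposite.unop_injective
    refine TrivSqZeroExt.ext (Prod.ext ?_ (hA _ _ fun r => ?_)) (LinearMap.ext fun b => ?_)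
    · simp
    · simp [ha]
    · simp [hq]
  · apply MulOpposite.unop_injective
    refine TrivSqZeroExt.ext (Prod.ext ?_ (hA _ _ fun r => ?_)) (LinearMap.ext fun b => ?_)
    · simp
    · have h1 : r (a m * y.unop.fst.2) =
        (r.comp (LinearMap.mulRight k y.unop.fst.2)) (a m) := rfl
      simp only [RingHom.id_apply, smul_eq_mul, MulOpposite.unop_mul, MulOpposite.unop_op,
        fst_mul, fst_add, fst_inl, fst_inr, add_zero, Prod.snd_mul]
      rw [h1, ha, ha, ← mul_smul]
      congr 2
      rw [← MulOpposite.op_unop y, ← MulOpposite.op_mul]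
      congr 1
      refine TrivSqZeroExt.ext ?_ (LinearMap.ext fun b => ?_)
      · simp
      · simp [dual_smul_left, mul_assoc]
    · simp only [RingHom.id_apply, smul_eq_mul, MulOpposite.unop_mul, MulOpposite.unop_op,
        snd_mul, snd_add, snd_inl, snd_inr, fst_add, fst_inl, fst_inr, add_zero, zero_add,
        LinearMap.add_apply, dual_smul_left, dual_smul_right, hq]
      have h1 : y.unop.snd (b * a m) = (y.unop.snd.comp (LinearMap.mulLeft k b)) (a m) := rfl
      rw [h1, ha, ← map_add, ← add_smul, ← mul_smul]
      congr 2
      rw [← MulOpposite.op_unop y, ← MulOpposite.op_mul, ← MulOpposite.op_add]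
      congr 1
      refine TrivSqZeroExt.ext (Prod.ext ?_ ?_) (LinearMap.ext fun x => ?_)
      · simp [mul_assoc]
      · simp
      · simp [dual_smul_right, mul_assoc]
  · simp
  · simp [hq]
  · simp [ha]

/-! ### The structure of the injective envelope -/

/-- Scalars of `k` acting on right `Dup k A`-modules. -/
noncomputable def scalarHom (k A : Type u) [Field k] [Ring A] [Algebra k A] :
    k →+* (Dup k A)ᵐᵒᵖ where
  toFun c := MulOpposite.op (inl (algebraMap k A c, algebraMap k A c))
  map_one' := by simp; rfl
  map_mul' c d := by
    rw [← MulOpposite.op_mul, ← inl_mul, Prod.mk_mul_mk, ← map_mul, mul_comm c d]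
  map_zero' := by simp; rfl
  map_add' c d := by
    rw [← MulOpposite.op_add, ← inl_add]
    simp

/-- The largest submodule of a right `Dup k A`-module `Q` that is an `A`-module through
`dupProj₁`. -/
def annSub (k A : Type u) [Field k] [Ring A] [Algebra k A] (Q : Type u) [AddCommGroup Q]
    [Module (Dup k A)ᵐᵒᵖ Q] : Submodule (Dup k A)ᵐᵒᵖ Q where
  carrier := {m | ∀ x : Dup k A, x.fst.1 = 0 → MulOpposite.op x • m = 0}
  zero_mem' := fun x _ => smul_zero _
  add_mem' := fun {m n} hm hn x hx => by rw [smul_add, hm x hx, hn x hx, add_zero]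
  smul_mem' := fun y m hm x hx => by
    rw [← mul_smul]
    exact hm (y.unop * x) (by simp [hx])

/-- An injective module `Q` whose socle is essential and generated by an `s` with `s * (e, 0) = s`
is projective, and cyclic on a generator `w` that lies in every submodule not contained in
`annSub`. -/
lemma structure_of_envelope [FiniteDimensional k A] {Q : Type u} [AddCommGroup Q]
    [Module (Dup k A)ᵐᵒᵖ Q] (hQ : Module.Injective (Dup k A)ᵐᵒᵖ Q) (e : A) (hee : e * e = e)
    (hsimple : ∀ a : A, e * a = a → a ≠ 0 → ∃ c : A, a * c = e)
    (s : Q) (hs0 : s ≠ 0) (hes : MulOpposite.op (inl (e, 0) : Dup k A) • s = s)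
    (hess : ∀ U : Submodule (Dup k A)ᵐᵒᵖ Q, U ≠ ⊥ → s ∈ U) :
    Module.Projective (Dup k A)ᵐᵒᵖ Q ∧ ∃ w : Q, w ∉ annSub k A Q ∧
      (∀ m : Q, ∃ y : (Dup k A)ᵐᵒᵖ, y • w = m) ∧
      ∀ u : Q, u ∉ annSub k A Q → ∃ y : (Dup k A)ᵐᵒᵖ, y • u = w := by
  have he0 : e ≠ 0 := by
    rintro rfl
    apply hs0
    rw [← hes]
    have : (inl ((0 : A), (0 : A)) : Dup k A) = 0 := rfl
    rw [this, MulOpposite.op_zero, zero_smul]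
  obtain ⟨ψ, hψs, hψ⟩ : ∃ ψ : Q →+ k, ψ s ≠ 0 ∧ ∀ (c : k) (m : Q), ψ (MulOpposite.op
      (inl (algebraMap k A c, algebraMap k A c) : Dup k A) • m) = c * ψ m := by
    let _ : Module k Q := Module.compHom Q (scalarHom k A)
    by_contra! hcon
    apply hs0
    refine (Module.forall_dual_apply_eq_zero_iff k s).1 fun f => ?_
    by_contra hf
    obtain ⟨c, m, hcm⟩ := hcon f.toAddMonoidHom hf
    exact hcm (f.map_smul c m)
  obtain ⟨h, hh⟩ := exists_hom_of_functional e ψ hψ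
  have hinj : Function.Injective h := by
    rw [← LinearMap.ker_eq_bot]
    by_contra hker
    have h1 : h s = 0 := hess _ hker
    have h2 := (hh s).2.1 1
    rw [h1, one_mul, hes] at h2
    exact hψs h2.symm
  -- The image of `h` lies in the right ideal generated by the idempotent `(0, e)`.
  have heh : ∀ m, (inl (0, e) : Dup k A) * (h m).unop = (h m).unop := by
    intro m
    refine TrivSqZeroExt.ext (Prod.ext ?_ ?_) (LinearMap.ext fun b => ?_)
    · simp [(hh m).1]
    · refine (Module.evalEquiv k A).injective (LinearMap.ext fun r => ?_)
      change r ((inl (0, e) * (h m).unop : Dup k A).fst.2) = r (h m).unop.fst.2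
      rw [(hh m).2.2 r]
      have h1 : r ((inl (0, e) * (h m).unop : Dup k A).fst.2) =
        (r.comp (LinearMap.mulLeft k e)) (h m).unop.fst.2 := by simp
      rw [h1, (hh m).2.2]
      congr 4
      ext x
      simp [← mul_assoc, hee]
    · simp [dual_smul_left, (hh m).2.1, mul_assoc, hee]
  have hunit : ∀ m, (h m).unop.fst.2 ≠ 0 →
      ∃ y : (Dup k A)ᵐᵒᵖ, h (y • m) = MulOpposite.op (inl (0, e)) := by
    intro m hm
    obtain ⟨c, hc⟩ := hsimple (h m).unop.fst.2 (by
      have := congrArg (fun x : Dup k A => x.fst.2) (heh m)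
      simpa using this) hm
    refine ⟨MulOpposite.op (inl (0, c)), ?_⟩
    rw [map_smul]
    apply MulOpposite.unop_injective
    refine TrivSqZeroExt.ext (Prod.ext ?_ ?_) (LinearMap.ext fun b => ?_)
    · simp
    · simp [hc]
    · simp [dual_smul_right]
  have hann : ∀ m, (h m).unop.fst.2 = 0 → m ∈ annSub k A Q := by
    intro m hm x hx
    apply hinj
    rw [map_smul, map_zero]
    apply MulOpposite.unop_injective
    refine TrivSqZeroExt.ext (Prod.ext ?_ ?_) (LinearMap.ext fun b => ?_)
    · simp [hx]
    · simp [hm]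
    · simp [dual_smul_left, dual_smul_right, hx, hm]
  obtain ⟨r, hr⟩ := hQ.out h hinj LinearMap.id
  have hr' : ∀ m, r (h m) = m := hr
  -- Every `m` is `r (0, e)` multiplied by `h m`, since `h m = (0, e) * h m`.
  have hgen : ∀ m, h m • r (MulOpposite.op (inl (0, e))) = m := by
    intro m
    rw [← map_smul, smul_eq_mul]
    have h1 : h m * MulOpposite.op (inl (0, e)) = h m := MulOpposite.unop_injective (heh m)
    rw [h1, hr']
  set w := r (MulOpposite.op (inl (0, e))) with hw
  have hhw : h w = MulOpposite.op (inl (0, e)) := by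
    by_cases hz : (h w).unop.fst.2 = 0
    · exfalso
      -- `h w` squares to zero and yet acts on `w` as the identity.
      have h0 : h w * h w = 0 := by
        apply MulOpposite.unop_injective
        refine TrivSqZeroExt.ext (Prod.ext ?_ ?_) (LinearMap.ext fun b => ?_)
        · simp [(hh w).1]
        · simp [hz]
        · simp [dual_smul_left, dual_smul_right, (hh w).1, hz]
      have h1 : w = 0 := by
        have h2 := congrArg (fun m => h w • m) (hgen w)
        simp only [← mul_smul, h0, zero_smul] at h2
        exact (h2.trans (hgen w)).symm
      apply hs0
      rw [← hgen s, h1, smul_zero]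
    · obtain ⟨y, hy⟩ := hunit w hz
      rw [hw, ← hy, hr']
  refine ⟨Module.Projective.of_split h r (LinearMap.ext hr), w, ?_, fun m => ⟨h m, hgen m⟩, ?_⟩
  · intro hmem
    have h1 := hmem (inl (0, 1)) rfl
    have h2 := congrArg h h1
    rw [map_smul, hhw, map_zero] at h2
    have h3 := congrArg (fun x : (Dup k A)ᵐᵒᵖ => x.unop.fst.2) h2
    apply he0
    simpa using h3
  · intro u hu
    obtain ⟨y, hy⟩ := hunit u (fun h0 => hu (hann u h0))
    exact ⟨y, hinj (by rw [hy, hhw])⟩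

/-- Under the conclusions of `structure_of_envelope`, `annSub` is the unique maximal submodule. -/
lemma sInf_coatoms_eq_annSub {Q : Type u} [AddCommGroup Q] [Module (Dup k A)ᵐᵒᵖ Q] (w : Q)
    (hw : w ∉ annSub k A Q) (hgen : ∀ m : Q, ∃ y : (Dup k A)ᵐᵒᵖ, y • w = m)
    (hmem : ∀ u : Q, u ∉ annSub k A Q → ∃ y : (Dup k A)ᵐᵒᵖ, y • u = w) :
    sInf {U : Submodule (Dup k A)ᵐᵒᵖ Q | IsCoatom U} = annSub k A Q := by
  have htop : ∀ U : Submodule (Dup k A)ᵐᵒᵖ Q, ¬ U ≤ annSub k A Q → U = ⊤ := by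
    intro U hU
    obtain ⟨u, huU, hu⟩ := SetLike.not_le_iff_exists.1 hU
    obtain ⟨y, hy⟩ := hmem u hu
    refine eq_top_iff.2 fun m _ => ?_
    obtain ⟨z, hz⟩ := hgen m
    rw [← hz, ← hy]
    exact U.smul_mem _ (U.smul_mem _ huU)
  have hne : annSub k A Q ≠ ⊤ := fun h => hw (h ▸ Submodule.mem_top)
  have hco : IsCoatom (annSub k A Q) := ⟨hne, fun U hU => htop U hU.not_ge⟩
  have hset : {U : Submodule (Dup k A)ᵐᵒᵖ Q | IsCoatom U} = {annSub k A Q} := by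
    ext U
    refine ⟨fun hU => ?_, fun hU => ?_⟩
    · have hle : U ≤ annSub k A Q := by
        by_contra hc
        exact hU.1 (htop U hc)
      exact (hU.le_iff.1 hle).resolve_left hne |>.symm
    · rw [Set.mem_singleton_iff.1 hU]; exact hco
  rw [hset, sInf_singleton]

/-! ### The injective `A`-module as a radical -/

/-- The diagonal section of `dupProj₁`. -/
noncomputable def diagHom (k A : Type u) [Field k] [Ring A] [Algebra k A] :
    Aᵐᵒᵖ →+* (Dup k A)ᵐᵒᵖ where
  toFun a := MulOpposite.op (inl (a.unop, a.unop))
  map_one' := by simp; rfl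
  map_mul' c d := by
    rw [← MulOpposite.op_mul, ← inl_mul]
    simp
  map_zero' := by simp; rfl
  map_add' c d := by
    rw [← MulOpposite.op_add, ← inl_add]
    simp

/-- On `annSub` the duplicated algebra acts through `dupProj₁`, so there `A`-submodules are
`Ā`-submodules. -/
lemma smul_eq_diag {Q : Type u} [AddCommGroup Q] [Module (Dup k A)ᵐᵒᵖ Q] {t : Q}
    (ht : t ∈ annSub k A Q) (y : (Dup k A)ᵐᵒᵖ) :
    y • t = diagHom k A (MulOpposite.op y.unop.fst.1) • t := by
  rw [← sub_eq_zero, ← sub_smul]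
  exact ht (y - diagHom k A (MulOpposite.op y.unop.fst.1)).unop (by simp [diagHom])

end Helpers

/-- Let `a` be a sink of `Q_A`, encoded by a simple projective right
A-module `S = S_a`, let `I = I_a` be the injective envelope of `S` over `A` and let
`Q = Ī_a = P̄_{a'}` be the injective envelope of `S` over the duplicated algebra `Ā`.
Then `Q` is projective-injective and `I_a`, viewed as an Ā-module, is isomorphic to the
radical of `Q` (the intersection of the maximal submodules of `Q`). -/
theorem injective_at_sink_is_radical_of_proj_injective
    (k A : Type u) [Field k] [IsAlgClosed k] [Ring A] [Algebra k A]
    [FiniteDimensional k A] (hA : IsHereditaryRing Aᵐᵒᵖ)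
    (S : ModuleCat.{u} Aᵐᵒᵖ) (hS : IsSimpleModule Aᵐᵒᵖ S)
    (hSproj : Module.Projective Aᵐᵒᵖ S)
    (I : ModuleCat.{u} Aᵐᵒᵖ) (j : S →ₗ[Aᵐᵒᵖ] I) (hI : IsInjEnvelope Aᵐᵒᵖ S I j)
    (Q : ModuleCat.{u} (Dup k A)ᵐᵒᵖ) (i : ((resA k A).obj S) →ₗ[(Dup k A)ᵐᵒᵖ] Q)
    (hQ : IsInjEnvelope (Dup k A)ᵐᵒᵖ ((resA k A).obj S) Q i) :
    Module.Projective (Dup k A)ᵐᵒᵖ Q ∧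
    Nonempty ((((resA k A).obj I) : Type u) ≃ₗ[(Dup k A)ᵐᵒᵖ]
      (sInf {U : Submodule (Dup k A)ᵐᵒᵖ Q | IsCoatom U} : Submodule (Dup k A)ᵐᵒᵖ Q)) := by
  have := hS
  obtain ⟨x, e, hx0, hee, hex, hsimple⟩ := exists_idempotent hS hSproj
  have hi0 : i x ≠ 0 := fun h => hx0 (hQ.2.1 (h.trans (map_zero i).symm))
  have hsmul : ∀ (b : (Dup k A)ᵐᵒᵖ) (y : S), b • i y = i (MulOpposite.op b.unop.fst.1 • y) :=
    fun b y => (i.map_smul b y).symm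
  -- `S` is simple, so a submodule meeting its image nontrivially contains it.
  have hess : ∀ U : Submodule (Dup k A)ᵐᵒᵖ Q, U ≠ ⊥ → i x ∈ U := by
    intro U hU
    obtain ⟨v, ⟨hvU, ⟨y, rfl⟩⟩, hv0⟩ := Submodule.exists_mem_ne_zero_of_ne_bot (hQ.2.2 U hU)
    have hy : (show S from y) ≠ 0 := fun h => hv0 ((congrArg i h).trans (map_zero i))
    obtain ⟨c, hc⟩ := IsSimpleModule.toSpanSingleton_surjective Aᵐᵒᵖ hy x
    have h1 : diagHom k A c • i y = i x := (hsmul _ y).trans (congrArg i hc)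
    rw [← h1]
    exact U.smul_mem _ hvU
  have hes : MulOpposite.op (inl (e, 0) : Dup k A) • i x = i x :=
    (hsmul _ x).trans (congrArg i hex)
  obtain ⟨hproj, w, hw, hgen, hmem⟩ := structure_of_envelope hQ.1 e hee hsimple (i x) hi0 hes hess
  refine ⟨hproj, ?_⟩
  rw [sInf_coatoms_eq_annSub w hw hgen hmem]
  -- Extend `i` along `j` to a map `g` over the duplicated algebra.
  let j' : (resA k A).obj S →ₗ[(Dup k A)ᵐᵒᵖ] (resA k A).obj I :=
    { toFun := fun y => j y
      map_add' := fun a b => j.map_add a b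
      map_smul' := fun b y => j.map_smul _ y }
  obtain ⟨g, hg⟩ := hQ.1.out j' hI.2.1 i
  have hgj : ∀ y : S, g (j y) = i y := hg
  have hgann : ∀ z : (resA k A).obj I, g z ∈ annSub k A Q := by
    intro z b hb
    rw [← map_smul]
    have h1 : MulOpposite.op b • z = 0 := by
      change (MulOpposite.op b.fst.1 • (z : I)) = 0
      rw [hb, MulOpposite.op_zero, zero_smul]
    rw [h1, map_zero]
  let _ : Module Aᵐᵒᵖ Q := Module.compHom Q (diagHom k A)
  let gA : I →ₗ[Aᵐᵒᵖ] Q :=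
    { toFun := fun z => g z
      map_add' := fun a b => g.map_add a b
      map_smul' := fun b z => g.map_smul (diagHom k A b) z }
  have hginj : Function.Injective gA := by
    rw [← LinearMap.ker_eq_bot]
    by_contra hker
    obtain ⟨v, ⟨hv, ⟨y, rfl⟩⟩, hv0⟩ := Submodule.exists_mem_ne_zero_of_ne_bot (hI.2.2 _ hker)
    have h1 : i y = 0 := (hgj y).symm.trans hv
    have h2 : y = 0 := hQ.2.1 (h1.trans (map_zero i).symm)
    exact hv0 (by rw [h2, map_zero])
  obtain ⟨r, hr⟩ := hI.1.out gA hginj LinearMap.id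
  -- The elements of `annSub` killed by the retraction form a submodule missing the socle.
  let V : Submodule (Dup k A)ᵐᵒᵖ Q :=
    { carrier := {t | t ∈ annSub k A Q ∧ r t = 0}
      zero_mem' := ⟨zero_mem _, map_zero r⟩
      add_mem' := fun {a b} ha hb => ⟨add_mem ha.1 hb.1, by rw [map_add, ha.2, hb.2, add_zero]⟩
      smul_mem' := fun b t ht => ⟨Submodule.smul_mem _ b ht.1, by
        rw [smul_eq_diag ht.1]
        exact (r.map_smul (MulOpposite.op b.unop.fst.1) t).trans (by rw [ht.2, smul_zero])⟩ }
  have hV : V = ⊥ := by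
    by_contra hne
    have h1 : r (i x) = 0 := (hess V hne).2
    have h2 : r (i x) = j x := by
      rw [← hgj x]; exact hr (j x)
    exact hx0 (hI.2.1 ((h2.symm.trans h1).trans (map_zero j).symm))
  refine ⟨LinearEquiv.ofBijective (g.codRestrict (annSub k A Q) hgann) ⟨?_, ?_⟩⟩
  · intro a b hab
    exact hginj (congrArg Subtype.val hab)
  · rintro ⟨t, ht⟩
    refine ⟨r t, Subtype.ext ?_⟩
    have h1 : t - g (r t) ∈ V := ⟨sub_mem ht (hgann _), by
      rw [map_sub, sub_eq_zero]; exact (hr (r t)).symm⟩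
    rw [hV, Submodule.mem_bot, sub_eq_zero] at h1
    exact h1.symm
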